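/- arXiv:1512.05948 — 2 statements merged into one kernel-verified Lean document; each statement's English description precedes it below -/
import Mathlib

section
/- In the presented group G = ⟨a, b, c, d ∣ a² = b² = c² = d² = d·c·b·a = 1⟩, the images of the generators a, b, c, d have order exactly 2 and are pairwise non-conjugate, and every element of order 2 in G is conjugate to the image of one of a, b, c, d; thus G has exactly four conjugacy classes of elements of order 2. -/
/-- The relators `a², b², c², d², d·c·b·a` in the free group on `a,b,c,d`
(encoded as `0,1,2,3 : Fin 4`). -/
def sphereRels : Set (FreeGroup (Fin 4)) :=
  {FreeGroup.of 0 * FreeGroup.of 0, FreeGroup.of 1 * FreeGroup.of 1,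
   FreeGroup.of 2 * FreeGroup.of 2, FreeGroup.of 3 * FreeGroup.of 3,
   FreeGroup.of 3 * FreeGroup.of 2 * FreeGroup.of 1 * FreeGroup.of 0}

/-- The presented group `G = ⟨a,b,c,d ∣ a² = b² = c² = d² = d·c·b·a = 1⟩`. -/
abbrev Gp : Type := PresentedGroup sphereRels

/-!
The group acts on `ℤ²` with `a, b, c, d` as the point reflections `v ↦ w - v` for
`w = (0, 0), (1, 0), (1, 1), (0, 1)`. The relations make `b a` and `d a` commute, and `a` inverts
both, so this action identifies the group with the generalized dihedral group of `ℤ²`. In the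
generalized dihedral group of an abelian group `A` without elements of order two, the involutions
are exactly the reflections, and conjugation moves the reflection `v ↦ w - v` precisely within the
coset `w + 2A`. The four vectors above represent the four cosets of `2ℤ²` in `ℤ²`.
-/

/-- The generalized dihedral group `A ⋊ {±1}` of an additive commutative group `A`, encoded like
`DihedralGroup`: `translation a` stands for the map `v ↦ a + v` on `A`, and `reflection a` for
`v ↦ a - v`. -/
inductive GeneralizedDihedralGroup (A : Type*) : Type _
  | translation : A → GeneralizedDihedralGroup A
  | reflection : A → GeneralizedDihedralGroup A

namespace GeneralizedDihedralGroup

variable {A : Type*} [AddCommGroup A]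

instance : Group (GeneralizedDihedralGroup A) where
  mul
    | translation a, translation b => translation (a + b)
    | translation a, reflection b => reflection (a + b)
    | reflection a, translation b => reflection (a - b)
    | reflection a, reflection b => translation (a - b)
  one := translation 0
  inv
    | translation a => translation (-a)
    | reflection a => reflection a
  mul_assoc := by
    rintro (a | a) (b | b) (c | c) <;>
      first
      | exact congrArg translation (by abel)
      | exact congrArg reflection (by abel)
  one_mul := by
    rintro (a | a)
    · exact congrArg translation (zero_add a)
    · exact congrArg reflection (zero_add a)
  mul_one := by
    rintro (a | a)
    · exact congrArg translation (add_zero a)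
    · exact congrArg reflection (sub_zero a)
  inv_mul_cancel := by
    rintro (a | a)
    · exact congrArg translation (neg_add_cancel a)
    · exact congrArg translation (sub_self a)

theorem one_def : (1 : GeneralizedDihedralGroup A) = translation 0 := rfl

@[simp]
theorem translation_mul_translation (a b : A) :
    translation a * translation b = translation (a + b) := rfl

@[simp]
theorem translation_mul_reflection (a b : A) :
    translation a * reflection b = reflection (a + b) := rfl

@[simp]
theorem reflection_mul_translation (a b : A) :
    reflection a * translation b = reflection (a - b) := rfl

@[simp]
theorem reflection_mul_reflection (a b : A) :
    reflection a * reflection b = translation (a - b) := rfl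

@[simp]
theorem inv_translation (a : A) : (translation a)⁻¹ = translation (-a) := rfl

@[simp]
theorem inv_reflection (a : A) : (reflection a)⁻¹ = reflection a := rfl

@[simp]
theorem translation_eq_one_iff {a : A} : translation a = 1 ↔ a = 0 := by
  rw [one_def, translation.injEq]

theorem reflection_ne_one (a : A) : reflection a ≠ 1 := nofun

/-- The inclusion of the translation subgroup. -/
def translationHom (A : Type*) [AddCommGroup A] :
    Multiplicative A →* GeneralizedDihedralGroup A :=
  MonoidHom.mk' (fun a => translation a.toAdd) fun _ _ => rfl

@[simp]
theorem translation_zpow (a : A) (n : ℤ) : translation a ^ n = translation (n • a) :=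
  (map_zpow (translationHom A) (.ofAdd a) n).symm

@[simp]
theorem orderOf_reflection (a : A) : orderOf (reflection a) = 2 :=
  orderOf_eq_prime (by simp [sq]) (reflection_ne_one a)

theorem orderOf_eq_two_iff (hA : ∀ a : A, a + a = 0 → a = 0) {x : GeneralizedDihedralGroup A} :
    orderOf x = 2 ↔ ∃ a, x = reflection a := by
  refine ⟨fun hx => ?_, ?_⟩
  · obtain ⟨hsq, hne⟩ := orderOf_eq_prime_iff.1 hx
    rcases x with a | a
    · rw [sq, translation_mul_translation, translation_eq_one_iff] at hsq
      exact absurd (translation_eq_one_iff.2 (hA a hsq)) hne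
    · exact ⟨a, rfl⟩
  · rintro ⟨a, rfl⟩
    exact orderOf_reflection a

theorem isConj_reflection_iff {a b : A} :
    IsConj (reflection a) (reflection b) ↔ Even (a - b) := by
  rw [isConj_comm, isConj_iff]
  constructor
  · rintro ⟨c | c, hc⟩
    · refine ⟨c, ?_⟩
      rw [translation_mul_reflection, inv_translation, reflection_mul_translation,
        reflection.injEq] at hc
      rw [← hc]
      abel
    · refine ⟨c - b, ?_⟩
      rw [reflection_mul_reflection, inv_reflection, translation_mul_reflection,
        reflection.injEq] at hc
      rw [← hc]
      abel
  · rintro ⟨c, hc⟩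
    refine ⟨translation c, ?_⟩
    rw [translation_mul_reflection, inv_translation, reflection_mul_translation,
      reflection.injEq, eq_add_of_sub_eq hc]
    abel

section lift

variable {H : Type*} [Group H] (t : Multiplicative A →* H) (s : H) (hs : s * s = 1)
  (hst : ∀ a, SemiconjBy s (t a) (t a)⁻¹)

/-- The homomorphism out of the generalized dihedral group given by the images `t` of the
translations and `s` of `reflection 0`. -/
def lift : GeneralizedDihedralGroup A →* H :=
  MonoidHom.mk'
    (fun
      | translation a => t (.ofAdd a)
      | reflection a => t (.ofAdd a) * s) <| by
    rintro (a | a) (b | b)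
    · exact map_mul t _ _
    · exact (congrArg (· * s) (map_mul t _ _)).trans (mul_assoc _ _ _)
    · change t (.ofAdd a / .ofAdd b) * s = t (.ofAdd a) * s * t (.ofAdd b)
      rw [map_div, div_eq_mul_inv, mul_assoc, mul_assoc, (hst _).eq]
    · change t (.ofAdd a / .ofAdd b) = t (.ofAdd a) * s * (t (.ofAdd b) * s)
      rw [map_div, div_eq_mul_inv, mul_assoc, ← mul_assoc s, (hst _).eq, mul_assoc, hs, mul_one]

@[simp]
theorem lift_translation (a : A) : lift t s hs hst (translation a) = t (.ofAdd a) := rfl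

@[simp]
theorem lift_reflection (a : A) : lift t s hs hst (reflection a) = t (.ofAdd a) * s := rfl

end lift

end GeneralizedDihedralGroup

section zpowPairHom

variable {H : Type*} [Group H] {x y : H} (hxy : Commute x y)

/-- The homomorphism `(m, n) ↦ x ^ m * y ^ n` from `ℤ²` determined by a commuting pair. -/
def zpowPairHom : Multiplicative (ℤ × ℤ) →* H :=
  MonoidHom.mk' (fun v => x ^ v.toAdd.1 * y ^ v.toAdd.2) fun v w => by
    simp only [toAdd_mul, Prod.fst_add, Prod.snd_add, zpow_add]
    exact (hxy.zpow_zpow _ _).mul_mul_mul_comm _ _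

@[simp]
theorem zpowPairHom_apply (v : Multiplicative (ℤ × ℤ)) :
    zpowPairHom hxy v = x ^ v.toAdd.1 * y ^ v.toAdd.2 := rfl

theorem semiconjBy_zpowPairHom_inv {s : H} (hx : SemiconjBy s x x⁻¹) (hy : SemiconjBy s y y⁻¹)
    (v : Multiplicative (ℤ × ℤ)) :
    SemiconjBy s (zpowPairHom hxy v) (zpowPairHom hxy v)⁻¹ := by
  have hinv : (zpowPairHom hxy v)⁻¹ = x⁻¹ ^ v.toAdd.1 * y⁻¹ ^ v.toAdd.2 := by
    rw [zpowPairHom_apply, (hxy.zpow_zpow _ _).eq, mul_inv_rev, inv_zpow, inv_zpow]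
  rw [hinv]
  exact (hx.zpow_right _).mul_right (hy.zpow_right _)

end zpowPairHom

theorem semiconjBy_mul_inv_of_mul_self_eq_one {H : Type*} [Group H] {s x : H} (hs : s * s = 1)
    (hx : x * x = 1) : SemiconjBy s (x * s) (x * s)⁻¹ := by
  have hs_inv : s⁻¹ = s := inv_eq_of_mul_eq_one_left hs
  have hx_inv : x⁻¹ = x := inv_eq_of_mul_eq_one_left hx
  rw [SemiconjBy, mul_inv_rev, hs_inv, hx_inv, mul_assoc]

theorem isConj_map_mulEquiv_iff {M N : Type*} [Monoid M] [Monoid N] (e : M ≃* N) {x y : M} :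
    IsConj (e x) (e y) ↔ IsConj x y :=
  ⟨fun h => by simpa using e.symm.toMonoidHom.map_isConj h, e.toMonoidHom.map_isConj⟩

theorem even_prod_iff {M N : Type*} [Add M] [Add N] {v : M × N} :
    Even v ↔ Even v.1 ∧ Even v.2 := by
  constructor
  · rintro ⟨w, rfl⟩
    exact ⟨⟨w.1, rfl⟩, ⟨w.2, rfl⟩⟩
  · rintro ⟨⟨m, hm⟩, ⟨n, hn⟩⟩
    exact ⟨(m, n), Prod.ext hm hn⟩

namespace OrbifoldSphere

open GeneralizedDihedralGroup

/-- The vertices of the unit square in cyclic order: the generator `i` is the point reflection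
`v ↦ corner i - v`, whose centre is `corner i / 2`. -/
def corner : Fin 4 → ℤ × ℤ := ![(0, 0), (1, 0), (1, 1), (0, 1)]

theorem even_corner_sub_corner_iff {i j : Fin 4} : Even (corner i - corner j) ↔ i = j := by
  rw [even_prod_iff]
  revert i j
  decide

theorem exists_even_sub_corner (v : ℤ × ℤ) : ∃ i, Even (v - corner i) := by
  simp only [even_prod_iff, Prod.fst_sub, Prod.snd_sub, Int.even_sub]
  rcases Int.even_or_odd v.1 with h₁ | h₁ <;> rcases Int.even_or_odd v.2 with h₂ | h₂
  · exact ⟨0, by simp [corner, h₁, h₂]⟩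
  · exact ⟨3, by simp [corner, h₁, h₂]⟩
  · exact ⟨1, by simp [corner, h₁, h₂]⟩
  · exact ⟨2, by simp [corner, h₁, h₂]⟩

/-- The image in the presented group of the generator `i`. -/
abbrev gen (i : Fin 4) : Gp := PresentedGroup.of i

theorem gen_mul_self (i : Fin 4) : gen i * gen i = 1 :=
  PresentedGroup.one_of_mem (x := FreeGroup.of i * FreeGroup.of i) <| by
    fin_cases i <;> simp [sphereRels]

theorem gen_inv (i : Fin 4) : (gen i)⁻¹ = gen i :=
  inv_eq_of_mul_eq_one_left (gen_mul_self i)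

theorem gen_three_mul_two_mul_one_mul_zero : gen 3 * gen 2 * gen 1 * gen 0 = 1 :=
  PresentedGroup.one_of_mem (rels := sphereRels)
    (x := FreeGroup.of 3 * FreeGroup.of 2 * FreeGroup.of 1 * FreeGroup.of 0) <| by
    simp [sphereRels]

theorem gen_two_eq : gen 2 = gen 1 * gen 0 * gen 3 := by
  have h : gen 2 * (gen 1 * gen 0 * gen 3) = 1 := by
    rw [← mul_assoc, mul_eq_one_comm]
    simpa only [mul_assoc] using gen_three_mul_two_mul_one_mul_zero
  rw [← gen_inv 2, inv_eq_of_mul_eq_one_right h]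

theorem commute_gen_mul_gen_zero : Commute (gen 1 * gen 0) (gen 3 * gen 0) := by
  have hrev : gen 1 * gen 0 * gen 3 = gen 3 * gen 0 * gen 1 := by
    rw [← gen_two_eq, ← gen_inv 2, gen_two_eq]
    simp only [mul_inv_rev, gen_inv, mul_assoc]
  rw [Commute, SemiconjBy, ← mul_assoc, hrev, mul_assoc _ (gen 1)]

/-- The point reflection action, as a homomorphism to the generalized dihedral group of `ℤ²`. -/
def toDihedral : Gp →* GeneralizedDihedralGroup (ℤ × ℤ) :=
  PresentedGroup.toGroup (f := fun i => reflection (corner i)) <| by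
    simp only [sphereRels, Set.forall_mem_insert, Set.mem_singleton_iff, forall_eq]
    simp [corner]

@[simp]
theorem toDihedral_gen (i : Fin 4) : toDihedral (gen i) = reflection (corner i) :=
  PresentedGroup.toGroup.of _

/-- The inverse of `toDihedral`, sending the basis translations to `b a` and `d a`. -/
def ofDihedral : GeneralizedDihedralGroup (ℤ × ℤ) →* Gp :=
  lift (zpowPairHom commute_gen_mul_gen_zero) (gen 0) (gen_mul_self 0) <|
    semiconjBy_zpowPairHom_inv _
      (semiconjBy_mul_inv_of_mul_self_eq_one (gen_mul_self 0) (gen_mul_self 1))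
      (semiconjBy_mul_inv_of_mul_self_eq_one (gen_mul_self 0) (gen_mul_self 3))

theorem ofDihedral_reflection_corner (i : Fin 4) : ofDihedral (reflection (corner i)) = gen i := by
  fin_cases i
  · simp [ofDihedral, corner]
  · simp [ofDihedral, corner, mul_assoc, gen_mul_self]
  · simp [ofDihedral, corner, gen_two_eq, mul_assoc, gen_mul_self]
  · simp [ofDihedral, corner, mul_assoc, gen_mul_self]

theorem toDihedral_ofDihedral (x : GeneralizedDihedralGroup (ℤ × ℤ)) :
    toDihedral (ofDihedral x) = x := by
  rcases x with v | v <;> simp [ofDihedral, corner]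

/-- The group is the generalized dihedral group of `ℤ²`. -/
def equivDihedral : Gp ≃* GeneralizedDihedralGroup (ℤ × ℤ) :=
  MonoidHom.toMulEquiv toDihedral ofDihedral
    (PresentedGroup.ext fun i => by simpa using ofDihedral_reflection_corner i)
    (MonoidHom.ext toDihedral_ofDihedral)

@[simp]
theorem equivDihedral_gen (i : Fin 4) : equivDihedral (gen i) = reflection (corner i) :=
  toDihedral_gen i

theorem orderOf_gen (i : Fin 4) : orderOf (gen i) = 2 := by
  rw [← equivDihedral.orderOf_eq, equivDihedral_gen, orderOf_reflection]

theorem isConj_gen_iff {i j : Fin 4} : IsConj (gen i) (gen j) ↔ i = j := by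
  rw [← isConj_map_mulEquiv_iff equivDihedral, equivDihedral_gen, equivDihedral_gen,
    isConj_reflection_iff, even_corner_sub_corner_iff]

theorem exists_isConj_gen_of_orderOf_eq_two {x : Gp} (hx : orderOf x = 2) :
    ∃ i, IsConj x (gen i) := by
  have htorsion (v : ℤ × ℤ) (hv : v + v = 0) : v = 0 := by
    rwa [← two_nsmul, two_nsmul_eq_zero] at hv
  rw [← equivDihedral.orderOf_eq] at hx
  obtain ⟨v, hv⟩ := (GeneralizedDihedralGroup.orderOf_eq_two_iff htorsion).1 hx
  obtain ⟨i, hi⟩ := exists_even_sub_corner v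
  refine ⟨i, (isConj_map_mulEquiv_iff equivDihedral).1 ?_⟩
  rwa [hv, equivDihedral_gen, isConj_reflection_iff]

end OrbifoldSphere

/-- In `G = ⟨a,b,c,d ∣ a² = b² = c² = d² = d·c·b·a = 1⟩`, the images of the
generators have order exactly `2`, are pairwise non-conjugate, and every
element of order `2` is conjugate to one of them; thus `G` has exactly four
conjugacy classes of elements of order `2`. -/
theorem presentedGroup_order_two_classes :
    (∀ i : Fin 4, orderOf (PresentedGroup.of (rels := sphereRels) i) = 2) ∧
    (∀ i j : Fin 4, i ≠ j →
      ¬ IsConj (PresentedGroup.of (rels := sphereRels) i)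
        (PresentedGroup.of (rels := sphereRels) j)) ∧
    (∀ x : Gp, orderOf x = 2 →
      ∃ i : Fin 4, IsConj x (PresentedGroup.of (rels := sphereRels) i)) :=
  ⟨OrbifoldSphere.orderOf_gen, fun _ _ hij hconj => hij (OrbifoldSphere.isConj_gen_iff.1 hconj),
    fun _ => OrbifoldSphere.exists_isConj_gen_of_orderOf_eq_two⟩
end

section
/- Every injective group endomorphism φ of K = ℤ² ⋊ {±1} is of the form φ = M^v for a unique 2×2 integer matrix M with det M ≠ 0 and a unique vector v ∈ ℤ². -/
/-- The group `K = ℤ² ⋊ {±1}`: underlying set `ℤ² × {±1}` with multiplication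
`(m,ε)·(n,δ) = (m + ε·n, ε·δ)`, i.e. `-1` acts on `ℤ²` by negation. -/
@[ext]
structure Ksemi : Type where
  vec : Fin 2 → ℤ
  sgn : ℤˣ

namespace Ksemi

def kmul (x y : Ksemi) : Ksemi := ⟨x.vec + (x.sgn : ℤ) • y.vec, x.sgn * y.sgn⟩
def kone : Ksemi := ⟨0, 1⟩
def kinv (x : Ksemi) : Ksemi := ⟨-((x.sgn : ℤ) • x.vec), x.sgn⟩

theorem kmul_assoc (a b c : Ksemi) : kmul (kmul a b) c = kmul a (kmul b c) := by
  unfold kmul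
  refine Ksemi.ext ?_ ?_ <;>
    simp [smul_add, mul_smul, add_assoc, mul_assoc]

theorem kone_mul (a : Ksemi) : kmul kone a = a := by
  unfold kmul kone; refine Ksemi.ext ?_ ?_ <;> simp

theorem kmul_one (a : Ksemi) : kmul a kone = a := by
  unfold kmul kone; refine Ksemi.ext ?_ ?_ <;> simp

theorem kinv_mul (a : Ksemi) : kmul (kinv a) a = kone := by
  unfold kmul kinv kone
  refine Ksemi.ext ?_ ?_ <;> simp [Int.units_mul_self]

instance : Group Ksemi where
  mul := kmul
  one := kone
  inv := kinv
  mul_assoc := kmul_assoc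
  one_mul := kone_mul
  mul_one := kmul_one
  inv_mul_cancel := kinv_mul

end Ksemi

/-- For a 2×2 integer matrix `M` and `v ∈ ℤ²`, the map `M^v : K → K`,
`M^v(n,1) = (Mn,1)` and `M^v(n,-1) = (Mn+v,-1)`. -/
def Mv (M : Matrix (Fin 2) (Fin 2) ℤ) (v : Fin 2 → ℤ) : Ksemi → Ksemi :=
  fun x => ⟨M.mulVec x.vec + (if x.sgn = 1 then 0 else v), x.sgn⟩

/-!
The elements of order two in `K` are exactly those of sign `-1`, so an injective endomorphism `φ`
preserves signs. Hence `φ` restricts to an additive map of the lattice `ℤ²`, whose matrix is `M`,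
and sends `(0, -1)` to some `(v, -1)`; since `(n, -1) = (n, 1)(0, -1)`, these data determine `φ`.
A singular `M` would kill a nonzero lattice vector.
-/

namespace Ksemi

theorem vec_one : (1 : Ksemi).vec = 0 := rfl

theorem sgn_one : (1 : Ksemi).sgn = 1 := rfl

theorem vec_mul (x y : Ksemi) : (x * y).vec = x.vec + (x.sgn : ℤ) • y.vec := rfl

theorem sgn_mul (x y : Ksemi) : (x * y).sgn = x.sgn * y.sgn := rfl

theorem mk_one_mul_mk (m n : Fin 2 → ℤ) (ε : ℤˣ) :
    (⟨m, 1⟩ * ⟨n, ε⟩ : Ksemi) = ⟨m + n, ε⟩ := by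
  ext1 <;> simp [vec_mul, sgn_mul]

theorem sq_eq_one_iff (x : Ksemi) : x ^ 2 = 1 ↔ x = 1 ∨ x.sgn = -1 := by
  have double_eq_zero_iff : x.vec + x.vec = 0 ↔ x.vec = 0 := by
    rw [← two_nsmul, smul_eq_zero_iff_right two_ne_zero]
  rcases Int.units_eq_one_or x.sgn with hx | hx <;>
    simp [Ksemi.ext_iff, pow_two, vec_mul, sgn_mul, vec_one, sgn_one, hx, double_eq_zero_iff]

theorem orderOf_eq_two_iff (x : Ksemi) : orderOf x = 2 ↔ x.sgn = -1 := by
  have ne_one_of_sgn (hx : x.sgn = -1) : x ≠ 1 := by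
    rintro rfl
    exact absurd hx (by decide)
  rw [orderOf_eq_prime_iff, sq_eq_one_iff]
  tauto

theorem sgn_map_of_injective {φ : Ksemi →* Ksemi} (hφ : Function.Injective φ) (x : Ksemi) :
    (φ x).sgn = x.sgn := by
  have sgn_eq_neg_one_iff : (φ x).sgn = -1 ↔ x.sgn = -1 := by
    rw [← orderOf_eq_two_iff, ← orderOf_eq_two_iff, orderOf_injective φ hφ]
  rcases Int.units_eq_one_or (φ x).sgn with h | h <;>
    rcases Int.units_eq_one_or x.sgn with h' | h' <;> simp_all

/-- The restriction to the translation lattice `ℤ² = {(n, 1)}` of an endomorphism of `K` that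
preserves signs, as a `ℤ`-linear map. Its matrix is the `M` of `M^v`. -/
def linearPart (φ : Ksemi →* Ksemi) (hsgn : ∀ x, (φ x).sgn = x.sgn) :
    (Fin 2 → ℤ) →ₗ[ℤ] (Fin 2 → ℤ) :=
  (AddMonoidHom.mk' (fun n => (φ ⟨n, 1⟩).vec) fun m n => by
    rw [← mk_one_mul_mk, map_mul, vec_mul, hsgn, Units.val_one, one_smul]).toIntLinearMap

theorem map_mk_one (φ : Ksemi →* Ksemi) (hsgn : ∀ x, (φ x).sgn = x.sgn) (n : Fin 2 → ℤ) :
    φ ⟨n, 1⟩ = ⟨linearPart φ hsgn n, 1⟩ :=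
  Ksemi.ext rfl (hsgn _)

end Ksemi

section Mv

variable (M : Matrix (Fin 2) (Fin 2) ℤ) (v n : Fin 2 → ℤ)

theorem Mv_mk_one : Mv M v ⟨n, 1⟩ = ⟨M.mulVec n, 1⟩ := by
  simp [Mv]

theorem Mv_mk_neg_one : Mv M v ⟨n, -1⟩ = ⟨M.mulVec n + v, -1⟩ := by
  simp [Mv, show (-1 : ℤˣ) ≠ 1 by decide]

theorem Mv_injective2 : Function.Injective2 Mv := by
  intro M N v w h
  constructor
  · refine Matrix.mulVec_injective (funext fun n => ?_)
    simpa [Mv_mk_one] using congrFun h ⟨n, 1⟩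
  · simpa [Mv_mk_neg_one] using congrFun h ⟨0, -1⟩

variable {M v}

theorem det_ne_zero_of_injective_Mv (h : Function.Injective (Mv M v)) : M.det ≠ 0 := by
  intro hdet
  obtain ⟨n, n_ne_zero, hn⟩ := Matrix.exists_mulVec_eq_zero_iff.mpr hdet
  have Mv_eq : Mv M v ⟨n, 1⟩ = Mv M v ⟨0, 1⟩ := by
    rw [Mv_mk_one, Mv_mk_one, hn, Matrix.mulVec_zero]
  exact n_ne_zero (congrArg Ksemi.vec (h Mv_eq))

end Mv

theorem exists_eq_Mv_of_sgn_map (φ : Ksemi →* Ksemi) (hsgn : ∀ x, (φ x).sgn = x.sgn) :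
    ∃ M v, ⇑φ = Mv M v := by
  let M := LinearMap.toMatrix' (Ksemi.linearPart φ hsgn)
  let v := (φ ⟨0, -1⟩).vec
  have map_translation (n : Fin 2 → ℤ) : φ ⟨n, 1⟩ = ⟨M.mulVec n, 1⟩ := by
    rw [Ksemi.map_mk_one φ hsgn, LinearMap.toMatrix'_mulVec]
  have map_reflection : φ ⟨0, -1⟩ = ⟨v, -1⟩ := Ksemi.ext rfl (hsgn _)
  refine ⟨M, v, funext fun ⟨n, ε⟩ => ?_⟩
  rcases Int.units_eq_one_or ε with rfl | rfl
  · rw [map_translation, Mv_mk_one]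
  · calc
      φ ⟨n, -1⟩ = φ (⟨n, 1⟩ * ⟨0, -1⟩) := by rw [Ksemi.mk_one_mul_mk, add_zero]
      _ = ⟨M.mulVec n, 1⟩ * ⟨v, -1⟩ := by rw [map_mul, map_translation, map_reflection]
      _ = Mv M v ⟨n, -1⟩ := by rw [Ksemi.mk_one_mul_mk, Mv_mk_neg_one]

/-- Every injective group endomorphism `φ` of `K = ℤ² ⋊ {±1}` is of the form
`M^v` for a unique 2×2 integer matrix `M` with `det M ≠ 0` and a unique
vector `v ∈ ℤ²`. -/
theorem injective_endomorphism_eq_Mv (φ : Ksemi →* Ksemi)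
    (hφ : Function.Injective φ) :
    ∃! p : Matrix (Fin 2) (Fin 2) ℤ × (Fin 2 → ℤ),
      p.1.det ≠ 0 ∧ ⇑φ = Mv p.1 p.2 := by
  obtain ⟨M, v, φ_eq⟩ := exists_eq_Mv_of_sgn_map φ (Ksemi.sgn_map_of_injective hφ)
  refine ⟨(M, v), ⟨det_ne_zero_of_injective_Mv (φ_eq ▸ hφ), φ_eq⟩, ?_⟩
  rintro ⟨N, w⟩ ⟨-, φ_eq'⟩
  obtain ⟨rfl, rfl⟩ := Mv_injective2 (φ_eq'.symm.trans φ_eq)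
  rfl
end
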